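/- With G_d as above (quotient of Hall's group by c_i = c₁^{d(i)}, d antisymmetric, d(1)=1), G_d is conjugacy separable if and only if d mod q is periodic for every positive integer q. -/

import Mathlib

/-- Generators of Hall's group: the shift `t`, and `a i`, `c i` for `i : ℤ`. -/
inductive Gen where
  | t : Gen
  | a : ℤ → Gen
  | c : ℤ → Gen

/-- The commutator convention of the paper: `[x, y] = x⁻¹y⁻¹xy`. -/
def pcomm {G : Type*} [Group G] (x y : G) : G := x⁻¹ * y⁻¹ * x * y

/-- The relations of `G_d`: those of Hall's group `G₀` together with
`c i = (c 1) ^ d i`. -/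
def rels (d : ℤ → ℤ) : Set (FreeGroup Gen) :=
  (Set.range fun i : ℤ =>
    FreeGroup.of Gen.t * FreeGroup.of (Gen.a i) * (FreeGroup.of Gen.t)⁻¹ *
      (FreeGroup.of (Gen.a (i + 1)))⁻¹) ∪
  (Set.range fun i : ℤ =>
    FreeGroup.of Gen.t * FreeGroup.of (Gen.c i) * (FreeGroup.of Gen.t)⁻¹ *
      (FreeGroup.of (Gen.c i))⁻¹) ∪
  (Set.range fun p : ℤ × ℤ =>
    pcomm (FreeGroup.of (Gen.a p.1)) (FreeGroup.of (Gen.a p.2)) *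
      (FreeGroup.of (Gen.c (p.1 - p.2)))⁻¹) ∪
  (Set.range fun p : ℤ × ℤ =>
    pcomm (FreeGroup.of (Gen.c p.1)) (FreeGroup.of (Gen.a p.2))) ∪
  (Set.range fun p : ℤ × ℤ =>
    pcomm (FreeGroup.of (Gen.c p.1)) (FreeGroup.of (Gen.c p.2))) ∪
  (Set.range fun i : ℤ =>
    FreeGroup.of (Gen.c i) * ((FreeGroup.of (Gen.c 1)) ^ (d i))⁻¹)

/-- The quotient `G_d` of Hall's group. -/
abbrev Gd (d : ℤ → ℤ) := PresentedGroup (rels d)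

/-!
`G_d` embeds into a central extension of the wreath product `(ℤ →₀ ℤ) ⋊ ℤ` whose elements have a
central coordinate, a base coordinate `f` and a translation coordinate `n`. The embedding is onto
up to central elements, so it preserves and reflects conjugacy. If `d` has period `P` modulo `q`,
reducing the index modulo `P` and the coefficients modulo `q` maps the model to a finite group, and
for suitable `q` and then `P` this separates non-conjugate `x` and `y` with the same `n`:

* Only finitely many translations can carry `x` to `y`: modulo powers of `x` if `n ≠ 0`, and by
  comparing supports if `n = 0` (when `x` is central, every translation acts trivially).
* For a fixed translation the first obstruction is the class of a difference of base coordinates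
  modulo the functions `h - shift n h`. It survives reduction.
* If that class vanishes, `x` is conjugate to `y` up to a central factor `z`, and the second
  obstruction is whether `z * x` is conjugate to `x` by an element without translation. For `n = 0`
  this asks whether `z` lies in a subgroup of `ℤ` determined by `f`. For `n ≠ 0` it asks whether
  `z = 0`: in the finite model such an element has a base coordinate `s` invariant under
  translation by `n`, and `d` modulo `q` has some period `P₀`, so once `n * P₀ * q` divides `P`, the
  terms of the sum `form d s e_j` come in equal groups of size divisible by `q`.

Conversely, conjugating `a₀ ^ q` by powers of `a₁` multiplies it by powers of `c₁ ^ q`, and `a₀ ^ q`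
is conjugate to `a₀ ^ q * c₁ ^ j` only if `q ∣ j`. Separating these elements gives a finite quotient
in which the order of `c₁` is a multiple of `q`. There `t ^ P = 1` for some `P > 0`, so
`a (i + P) = a i` and therefore `c₁ ^ d (i + P) = c₁ ^ d i`.
-/

namespace HallGroup

section Finsupp

variable {I J S T : Type*} [AddCommGroup I] [AddCommGroup J] [CommRing S] [CommRing T]

/-- Translation by `k` on finitely supported functions: the action of the shift `t ^ k` on
the base of the wreath product. -/
noncomputable def shift (k : I) : (I →₀ S) →ₗ[S] (I →₀ S) :=
  Finsupp.lmapDomain S S (k + ·)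

@[simp]
lemma shift_single (k i : I) (r : S) :
    shift k (Finsupp.single i r) = Finsupp.single (k + i) r := by
  simp [shift]

lemma shift_apply_add (k i : I) (f : I →₀ S) : shift k f (k + i) = f i :=
  Finsupp.mapDomain_apply (add_right_injective k) f i

lemma shift_comp_shift (k l : I) : shift k ∘ₗ shift l = shift (S := S) (k + l) := by
  ext; simp [add_assoc]

lemma shift_shift (k l : I) (f : I →₀ S) : shift k (shift l f) = shift (k + l) f :=
  DFunLike.congr_fun (shift_comp_shift k l) f

@[simp]
lemma shift_zero (f : I →₀ S) : shift 0 f = f := by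
  simp only [shift, Finsupp.lmapDomain_apply, zero_add]
  exact Finsupp.mapDomain_id

/-- The translation-invariant bilinear form with `form d eᵢ eⱼ = d (i - j)`. -/
noncomputable def form (d : I → S) : (I →₀ S) →ₗ[S] (I →₀ S) →ₗ[S] S :=
  Finsupp.linearCombination S fun i => Finsupp.linearCombination S fun j => d (i - j)

@[simp]
lemma form_single (d : I → S) (i j : I) (r s : S) :
    form d (Finsupp.single i r) (Finsupp.single j s) = r * (s * d (i - j)) := by
  simp [form]

@[simp]
lemma form_shift (d : I → S) (k : I) (f g : I →₀ S) :
    form d (shift k f) (shift k g) = form d f g := by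
  have : (form d).compl₁₂ (shift k) (shift k) = form d := by ext; simp
  exact congr($this f g)

lemma form_swap {d : I → S} (hd : d.Odd) (f g : I →₀ S) : form d g f = -form d f g := by
  have : (form d).flip = -form d := by ext i j; simp [← hd (i - j)]
  exact congr($this f g)

/-- The map induced by `α` on indices and by `σ` on coefficients. -/
noncomputable def push (α : I →+ J) (σ : S →+* T) : (I →₀ S) →+ (J →₀ T) :=
  (Finsupp.mapDomain.addMonoidHom α).comp (Finsupp.mapRange.addMonoidHom σ.toAddMonoidHom)

@[simp]
lemma push_single (α : I →+ J) (σ : S →+* T) (i : I) (r : S) :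
    push α σ (Finsupp.single i r) = Finsupp.single (α i) (σ r) := by
  simp [push]

lemma push_apply [DecidableEq J] (α : I →+ J) (σ : S →+* T) (f : I →₀ S) (j : J) :
    push α σ f j = ∑ i ∈ f.support, if α i = j then σ (f i) else 0 := by
  conv_lhs => rw [← f.sum_single]
  simp [Finsupp.sum, Finsupp.finsetSum_apply, Finsupp.single_apply]

lemma push_shift (α : I →+ J) (σ : S →+* T) (k : I) (f : I →₀ S) :
    push α σ (shift k f) = shift (α k) (push α σ f) := by
  have : (push α σ).comp (shift k).toAddMonoidHom =
      (shift (α k)).toAddMonoidHom.comp (push α σ) := by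
    ext1 i; ext1 r; simp
  exact congr($this f)

lemma push_push {K U : Type*} [AddCommGroup K] [CommRing U] (α : I →+ J) (σ : S →+* T)
    (β : J →+ K) (τ : T →+* U) (f : I →₀ S) :
    push β τ (push α σ f) = push (β.comp α) (τ.comp σ) f := by
  have : (push β τ).comp (push α σ) = push (β.comp α) (τ.comp σ) := by
    ext1 i; ext1 r; simp
  exact congr($this f)

lemma push_surjective {α : I →+ J} {σ : S →+* T} (hα : Function.Surjective α)
    (hσ : Function.Surjective σ) : Function.Surjective (push α σ) :=
  (Finsupp.mapDomain_surjective hα).comp (Finsupp.mapRange_surjective σ (map_zero σ) hσ)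

lemma form_push {α : I →+ J} {σ : S →+* T} {d : I → S} {e : J → T}
    (h : ∀ i, e (α i) = σ (d i)) (f g : I →₀ S) :
    form e (push α σ f) (push α σ g) = σ (form d f g) := by
  induction f using Finsupp.induction_linear with
  | zero => simp
  | add f f' hf hf' => simp [hf, hf']
  | single i r =>
    induction g using Finsupp.induction_linear with
    | zero => simp
    | add g g' hg hg' => simp only [map_add, hg, hg']
    | single j s => simp [← h]

/-- The functions of the form `h - shift n h`, which measure the effect of conjugation on the
base coordinate of an element with translation coordinate `n`. -/
noncomputable def coboundaries (S : Type*) [CommRing S] (n : I) : Submodule S (I →₀ S) :=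
  LinearMap.range (LinearMap.id - shift n)

lemma mem_coboundaries {n : I} {f : I →₀ S} :
    f ∈ coboundaries S n ↔ ∃ h, h - shift n h = f := Iff.rfl

lemma push_eq_zero_of_mem_coboundaries {α : I →+ J} {n : I} (hn : α n = 0) (σ : S →+* T)
    {f : I →₀ S} (hf : f ∈ coboundaries S n) : push α σ f = 0 := by
  obtain ⟨h, rfl⟩ := mem_coboundaries.mp hf
  rw [map_sub, push_shift, hn, shift_zero, sub_self]

lemma shift_sub_self_mem_coboundaries {n k : I} (hk : k ∈ AddSubgroup.zmultiples n)
    (f : I →₀ S) : shift k f - f ∈ coboundaries S n := by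
  rw [AddSubgroup.zmultiples_eq_closure] at hk
  induction hk using AddSubgroup.closure_induction generalizing f with
  | mem k hk =>
    rw [Set.mem_singleton_iff] at hk
    exact mem_coboundaries.mpr ⟨-f, by rw [hk, map_neg]; abel⟩
  | zero => simp
  | add k l _ _ hk hl =>
    have := add_mem (hk (shift l f)) (hl f)
    rwa [shift_shift, sub_add_sub_cancel] at this
  | neg k _ hk =>
    have := neg_mem (hk (shift (-k) f))
    rwa [shift_shift, add_neg_cancel, shift_zero, neg_sub] at this

lemma mem_coboundaries_of_push_eq_zero {α : I →+ J} {n : I}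
    (hα : α.ker = AddSubgroup.zmultiples n) {f : I →₀ S}
    (hf : push α (RingHom.id S) f = 0) : f ∈ coboundaries S n := by
  let section_α : (J →₀ S) →ₗ[S] (I →₀ S) := Finsupp.lmapDomain S S (Function.invFun α)
  have key (f : I →₀ S) : section_α (push α (RingHom.id S) f) - f ∈ coboundaries S n := by
    induction f using Finsupp.induction_linear with
    | zero => simp
    | add f g hf hg => simpa only [map_add, add_sub_add_comm] using add_mem hf hg
    | single i r =>
      have hk : Function.invFun α (α i) - i ∈ AddSubgroup.zmultiples n := by
        rw [← hα, AddMonoidHom.mem_ker, map_sub, Function.invFun_eq (f := α) ⟨i, rfl⟩, sub_self]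
      simpa [section_α] using shift_sub_self_mem_coboundaries hk (Finsupp.single i r)
  simpa [hf] using key f

lemma sum_eq_zero_of_periodic [Fintype I] {F : I → S} {c : I} (hF : Function.Periodic F c)
    (hc : (addOrderOf c : S) = 0) : ∑ i, F i = 0 := by
  classical
  have card_coset (x : I ⧸ AddSubgroup.zmultiples c) :
      ({i | (i : I ⧸ AddSubgroup.zmultiples c) = x} : Finset I).card = addOrderOf c := by
    have := Nat.card_congr
      (QuotientAddGroup.preimageMkEquivAddSubgroupProdSet (AddSubgroup.zmultiples c) {x})
    rw [Nat.card_prod, Nat.card_zmultiples, Nat.card_coe_set_eq {x}, Set.ncard_singleton,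
      mul_one] at this
    rw [← this, ← Fintype.card_subtype, ← Nat.card_eq_fintype_card]
    rfl
  calc ∑ i, F i = ∑ i : I, hF.lift (QuotientAddGroup.mk i) := rfl
    _ = ∑ x, ∑ i : I with QuotientAddGroup.mk (s := .zmultiples c) i = x, hF.lift x :=
      (Finset.sum_fiberwise' _ _ _).symm
    _ = 0 := by simp [card_coset, hc]

lemma form_eq_zero_of_periodic [Finite I] {d : I → S} {c : I} {f : I →₀ S}
    (hd : Function.Periodic d c) (hf : Function.Periodic f c) (hc : (addOrderOf c : S) = 0)
    (g : I →₀ S) : form d f g = 0 := by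
  have := Fintype.ofFinite I
  have h_single (j : I) : form d f (Finsupp.single j 1) = 0 := by
    rw [form, Finsupp.linearCombination_apply, Finsupp.sum_fintype _ _ (by simp)]
    suffices ∑ i, f i * d (i - j) = 0 by simpa
    refine sum_eq_zero_of_periodic (fun i => ?_) hc
    rw [hf i, add_sub_right_comm, hd]
  have h_form : form d f = 0 := by ext j; simpa using h_single j
  simp [h_form]

end Finsupp

section Model

variable {I J S T : Type*} [AddCommGroup I] [AddCommGroup J] [CommRing S] [CommRing T]

/-- The central extension by `S` of the wreath product `(I →₀ S) ⋊ I` with cocycle `form d`.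
It stands in for `G_d` over `ℤ`, and for its finite quotients over finite `I` and `S`. The cocycle
has commutator form `2 * form d` when `d` is odd, so `G_d` embeds with `c i` sent to `2 * d i`;
unlike a cocycle with commutator form `form d`, it exists for every `I`. -/
@[ext]
structure Model (d : I → S) where
  /-- The central coordinate. -/
  z : S
  /-- The base coordinate. -/
  f : I →₀ S
  /-- The translation coordinate. -/
  n : I

namespace Model

variable {d : I → S}

noncomputable instance : Mul (Model d) :=
  ⟨fun x y => ⟨x.z + y.z + form d x.f (shift x.n y.f), x.f + shift x.n y.f, x.n + y.n⟩⟩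

noncomputable instance : One (Model d) := ⟨⟨0, 0, 0⟩⟩

noncomputable instance : Inv (Model d) :=
  ⟨fun x => ⟨-x.z + form d x.f x.f, -shift (-x.n) x.f, -x.n⟩⟩

@[simp] lemma one_z : (1 : Model d).z = 0 := rfl
@[simp] lemma one_f : (1 : Model d).f = 0 := rfl
@[simp] lemma one_n : (1 : Model d).n = 0 := rfl

@[simp] lemma mul_z (x y : Model d) :
    (x * y).z = x.z + y.z + form d x.f (shift x.n y.f) := rfl
@[simp] lemma mul_f (x y : Model d) : (x * y).f = x.f + shift x.n y.f := rfl
@[simp] lemma mul_n (x y : Model d) : (x * y).n = x.n + y.n := rfl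

@[simp] lemma inv_z (x : Model d) : x⁻¹.z = -x.z + form d x.f x.f := rfl
@[simp] lemma inv_f (x : Model d) : x⁻¹.f = -shift (-x.n) x.f := rfl
@[simp] lemma inv_n (x : Model d) : x⁻¹.n = -x.n := rfl

noncomputable instance : Group (Model d) :=
  Group.ofLeftAxioms
    (fun x y w => by
      ext1
      · have := form_shift d x.n y.f (shift y.n w.f)
        rw [shift_shift] at this
        simp only [mul_z, mul_f, mul_n, map_add, LinearMap.add_apply, shift_shift, this]
        ring
      · simp [shift_shift, add_assoc]
      · simp [add_assoc])
    (fun x => by ext1 <;> simp)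
    (fun x => by ext1 <;> simp)

instance [Finite I] [Finite S] : Finite (Model d) :=
  Finite.of_injective (fun x : Model d => (x.z, (x.f : I → S), x.n)) fun x y h => by
    simp only [Prod.mk.injEq, DFunLike.coe_fn_eq] at h
    exact Model.ext h.1 h.2.1 h.2.2

lemma zpow_n (x : Model d) (k : ℤ) : (x ^ k).n = k • x.n := by
  let φ : Model d →* Multiplicative I :=
    { toFun := fun x => .ofAdd x.n, map_one' := rfl, map_mul' := fun _ _ => rfl }
  exact congrArg Multiplicative.toAdd (map_zpow φ x k)

lemma central_zpow (z : S) (k : ℤ) : (⟨z, 0, 0⟩ : Model d) ^ k = ⟨k • z, 0, 0⟩ := by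
  let φ : Multiplicative S →* Model d :=
    { toFun := fun z => ⟨z.toAdd, 0, 0⟩
      map_one' := rfl
      map_mul' := fun x y => by ext1 <;> simp }
  exact (map_zpow φ (.ofAdd z) k).symm

lemma single_zpow (h0 : d 0 = 0) (i : I) (r : S) (k : ℤ) :
    (⟨0, Finsupp.single i r, 0⟩ : Model d) ^ k = ⟨0, Finsupp.single i (k • r), 0⟩ := by
  let φ : Multiplicative S →* Model d :=
    { toFun := fun r => ⟨0, Finsupp.single i r.toAdd, 0⟩
      map_one' := by ext1 <;> simp
      map_mul' := fun x y => by ext1 <;> simp [h0] }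
  exact (map_zpow φ (.ofAdd r) k).symm

lemma translation_zpow (n : I) (k : ℤ) : (⟨0, 0, n⟩ : Model d) ^ k = ⟨0, 0, k • n⟩ := by
  let φ : Multiplicative I →* Model d :=
    { toFun := fun n => ⟨0, 0, n.toAdd⟩
      map_one' := rfl
      map_mul' := fun x y => by ext1 <;> simp }
  exact (map_zpow φ (.ofAdd n) k).symm

lemma central_commute (z : S) (x : Model d) : Commute ⟨z, 0, 0⟩ x := by
  ext1 <;> simp [add_comm]

/-- Functoriality of the model in the index group and the coefficient ring. -/
noncomputable def map {e : J → T} (α : I →+ J) (σ : S →+* T) (h : ∀ i, e (α i) = σ (d i)) :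
    Model d →* Model e where
  toFun x := ⟨σ x.z, push α σ x.f, α x.n⟩
  map_one' := by ext1 <;> simp
  map_mul' x y := by ext1 <;> simp [push_shift, ← form_push h]

lemma semiconjBy_iff {u x y : Model d} :
    SemiconjBy u x y ↔ x.n = y.n ∧ u.f + shift u.n x.f = y.f + shift x.n u.f ∧
      x.z + form d u.f (shift u.n x.f) = y.z + form d y.f (shift x.n u.f) := by
  simp only [SemiconjBy, Model.ext_iff, mul_z, mul_f, mul_n]
  constructor
  · rintro ⟨hz, hf, hn⟩
    have hn : x.n = y.n := by rwa [add_comm, add_right_cancel_iff] at hn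
    rw [hn]
    exact ⟨rfl, hf, by linear_combination hz⟩
  · rintro ⟨hn, hf, hz⟩
    rw [hn] at hf hz ⊢
    exact ⟨by linear_combination hz, hf, add_comm _ _⟩

end Model

lemma isConj_iff_exists_semiconjBy {G : Type*} [Group G] {x y : G} :
    IsConj x y ↔ ∃ u, SemiconjBy u x y := by
  simp only [isConj_iff, mul_inv_eq_iff_eq_mul, SemiconjBy]

end Model

section Presentation

variable (d : ℤ → ℤ)

/-- The generator `t` of `G_d`. -/
def t : Gd d := PresentedGroup.of .t

/-- The generators `a i` of `G_d`. -/
def a (i : ℤ) : Gd d := PresentedGroup.of (.a i)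

/-- The generators `c i` of `G_d`. -/
def c (i : ℤ) : Gd d := PresentedGroup.of (.c i)

variable {d}

lemma conj_t_a (i : ℤ) : MulAut.conj (t d) (a d i) = a d (i + 1) :=
  mul_inv_eq_one.mp <| PresentedGroup.one_of_mem (rels := rels d)
    (.inl <| .inl <| .inl <| .inl <| .inl ⟨i, rfl⟩)

lemma conj_t_c (i : ℤ) : MulAut.conj (t d) (c d i) = c d i :=
  mul_inv_eq_one.mp <| PresentedGroup.one_of_mem (rels := rels d)
    (.inl <| .inl <| .inl <| .inl <| .inr ⟨i, rfl⟩)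

lemma pcomm_a_a (i j : ℤ) : pcomm (a d i) (a d j) = c d (i - j) :=
  mul_inv_eq_one.mp <| PresentedGroup.one_of_mem (rels := rels d)
    (.inl <| .inl <| .inl <| .inr ⟨(i, j), rfl⟩)

lemma pcomm_c_a (i j : ℤ) : pcomm (c d i) (a d j) = 1 :=
  PresentedGroup.one_of_mem (rels := rels d) (.inl <| .inl <| .inr ⟨(i, j), rfl⟩)

lemma c_eq_zpow (i : ℤ) : c d i = c d 1 ^ d i := by
  have := PresentedGroup.one_of_mem (rels := rels d) (.inr ⟨i, rfl⟩)
  rw [map_mul, map_inv, map_zpow] at this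
  exact mul_inv_eq_one.mp this

lemma commute_of_pcomm_eq_one {G : Type*} [Group G] {x y : G} (h : pcomm x y = 1) :
    Commute x y := by
  have : (y * x)⁻¹ * (x * y) = 1 := by simpa [pcomm, mul_assoc] using h
  exact (inv_mul_eq_one.mp this).symm

lemma commute_c_one (g : Gd d) : Commute g (c d 1) := by
  have hg : g ∈ Subgroup.closure (Set.range (PresentedGroup.of (rels := rels d))) := by
    rw [PresentedGroup.closure_range_of]; trivial
  induction hg using Subgroup.closure_induction with
  | mem x hx =>
    obtain ⟨_ | i | i, rfl⟩ := hx
    · exact mul_inv_eq_iff_eq_mul.mp (conj_t_c 1)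
    · exact (commute_of_pcomm_eq_one (pcomm_c_a 1 i)).symm
    · change Commute (c d i) (c d 1)
      rw [c_eq_zpow]
      exact (Commute.refl _).zpow_left _
  | one => exact .one_left _
  | mul g h _ _ hg hh => exact hg.mul_left hh
  | inv g _ hg => exact hg.inv_left

lemma conj_t_zpow_a (n i : ℤ) : MulAut.conj (t d ^ n) (a d i) = a d (n + i) := by
  have conj_t_inv_a (i : ℤ) : (MulAut.conj (t d))⁻¹ (a d i) = a d (i - 1) := by
    rw [MulAut.inv_apply, MulEquiv.symm_apply_eq, conj_t_a, sub_add_cancel]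
  rw [map_zpow]
  induction n generalizing i with
  | zero => simp
  | succ n ih => rw [zpow_add_one, MulAut.mul_apply, conj_t_a, ih, add_assoc, add_comm i]
  | pred n ih =>
    rw [zpow_sub_one, MulAut.mul_apply, conj_t_inv_a, ih, sub_eq_add_neg i, sub_eq_add_neg,
      add_assoc, add_comm i]

/-- The images of the generators under the embedding of `G_d` into its model. -/
noncomputable def genImage (d : ℤ → ℤ) : Gen → Model d
  | .t => ⟨0, 0, 1⟩
  | .a i => ⟨0, Finsupp.single i 1, 0⟩
  | .c i => ⟨2 * d i, 0, 0⟩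

lemma lift_genImage_eq_one (hd : d.Odd) (hd1 : d 1 = 1) {r : FreeGroup Gen} (hr : r ∈ rels d) :
    FreeGroup.lift (genImage d) r = 1 := by
  have h0 : d 0 = 0 := hd.map_zero
  rcases hr with ((((⟨i, rfl⟩ | ⟨i, rfl⟩) | ⟨⟨i, j⟩, rfl⟩) | ⟨⟨i, j⟩, rfl⟩) | ⟨⟨i, j⟩, rfl⟩) |
    ⟨i, rfl⟩
  · ext1 <;> simp [genImage, h0, add_comm]
  · ext1 <;> simp [genImage]
  · ext1
    · have := hd (i - j)
      rw [neg_sub] at this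
      simp [pcomm, genImage, h0, this]
      ring
    · simp [pcomm, genImage]
    · simp [pcomm, genImage]
  · ext1 <;> simp [pcomm, genImage]
  · ext1 <;> simp [pcomm, genImage]
  · ext1 <;> simp [genImage, Model.central_zpow, hd1, mul_comm]

/-- The embedding of `G_d` into its model. -/
noncomputable def toModel (hd : d.Odd) (hd1 : d 1 = 1) : Gd d →* Model d :=
  PresentedGroup.toGroup (f := genImage d) fun _ => lift_genImage_eq_one hd hd1

section ToModel

variable (hd : d.Odd) (hd1 : d 1 = 1)

lemma toModel_of (x : Gen) : toModel hd hd1 (PresentedGroup.of x) = genImage d x :=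
  PresentedGroup.toGroup.of (h := fun _ => lift_genImage_eq_one hd hd1)

lemma toModel_t_zpow (k : ℤ) : toModel hd hd1 (t d ^ k) = ⟨0, 0, k⟩ := by
  simp [t, toModel_of, genImage, Model.translation_zpow]

lemma toModel_a_zpow (i k : ℤ) : toModel hd hd1 (a d i ^ k) = ⟨0, Finsupp.single i k, 0⟩ := by
  simp [a, toModel_of, genImage, Model.single_zpow hd.map_zero]

lemma toModel_c_one_zpow (k : ℤ) : toModel hd hd1 (c d 1 ^ k) = ⟨2 * k, 0, 0⟩ := by
  simp [c, toModel_of, genImage, Model.central_zpow, hd1, mul_comm]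

lemma exists_toModel_mul_central (x : Model d) : ∃ g z, x = toModel hd hd1 g * ⟨z, 0, 0⟩ := by
  have exists_base (f : ℤ →₀ ℤ) :
      ∃ g, (toModel hd hd1 g).f = f ∧ (toModel hd hd1 g).n = 0 := by
    induction f using Finsupp.induction_linear with
    | zero => exact ⟨1, by simp⟩
    | add f f' hf hf' =>
      obtain ⟨g, hg, hn⟩ := hf
      obtain ⟨g', hg', hn'⟩ := hf'
      exact ⟨g * g', by simp [hg, hg', hn, hn']⟩
    | single i k => exact ⟨a d i ^ k, by simp [toModel_a_zpow]⟩
  obtain ⟨g, hf, hn⟩ := exists_base x.f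
  refine ⟨g * t d ^ x.n, x.z - (toModel hd hd1 g).z, ?_⟩
  ext1 <;> simp [toModel_t_zpow, hf, hn]

end ToModel

instance : (Subgroup.zpowers (c d 1)).Normal := by
  refine ⟨fun x hx g => ?_⟩
  obtain ⟨k, rfl⟩ := Subgroup.mem_zpowers_iff.mp hx
  rwa [((commute_c_one g).zpow_right k).eq, mul_inv_cancel_right]

lemma mk_c (i : ℤ) : (c d i : Gd d ⧸ Subgroup.zpowers (c d 1)) = 1 := by
  rw [QuotientGroup.eq_one_iff, c_eq_zpow i]
  exact Subgroup.zpow_mem_zpowers _ _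

lemma commute_mk_a (i j : ℤ) :
    Commute (a d i : Gd d ⧸ Subgroup.zpowers (c d 1)) (a d j) := by
  apply commute_of_pcomm_eq_one
  rw [← mk_c (i - j), ← pcomm_a_a]
  rfl

lemma exists_monoidHom_of_commute {ι G : Type*} [Group G] {x : ι → G}
    (hx : ∀ i j, Commute (x i) (x j)) :
    ∃ A : Multiplicative (ι →₀ ℤ) →* G, ∀ i k, A (.ofAdd (Finsupp.single i k)) = x i ^ k := by
  let _ : CommGroup (Subgroup.closure (Set.range x)) :=
    { mul_comm := (Subgroup.isMulCommutative_closure (by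
        rintro _ ⟨i, rfl⟩ _ ⟨j, rfl⟩
        exact hx i j)).is_comm.comm }
  let A : (ι →₀ ℤ) →+ Additive (Subgroup.closure (Set.range x)) :=
    Finsupp.liftAddHom fun i => zmultiplesHom _ <|
      Additive.ofMul ⟨x i, Subgroup.subset_closure ⟨i, rfl⟩⟩
  exact ⟨(Subgroup.subtype _).comp (AddMonoidHom.toMultiplicativeLeft A), fun i k => by simp [A]⟩

lemma exists_comp_toModel_eq_mk' (hd : d.Odd) (hd1 : d 1 = 1) :
    ∃ ψ : Model d →* Gd d ⧸ Subgroup.zpowers (c d 1),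
      ψ.comp (toModel hd hd1) = QuotientGroup.mk' _ := by
  let T : Gd d ⧸ Subgroup.zpowers (c d 1) := t d
  obtain ⟨A, hA⟩ := exists_monoidHom_of_commute (commute_mk_a (d := d))
  have A_shift (n : ℤ) (f : ℤ →₀ ℤ) :
      A (.ofAdd (shift n f)) = T ^ n * A (.ofAdd f) * (T ^ n)⁻¹ := by
    suffices A.comp (AddMonoidHom.toMultiplicative (shift n).toAddMonoidHom) =
        (MulAut.conj (T ^ n)).toMonoidHom.comp A from congr($this (.ofAdd f))
    refine Finsupp.mulHom_ext fun i k => ?_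
    have conj_T_a : MulAut.conj (T ^ n) (a d i) = (a d (n + i) : Gd d ⧸ _) :=
      congrArg _ (conj_t_zpow_a n i)
    have : A (.ofAdd (shift n (.single i k))) = MulAut.conj (T ^ n) (A (.ofAdd (.single i k))) := by
      rw [shift_single, hA, hA, map_zpow, conj_T_a]
    exact this
  let ψ : Model d →* Gd d ⧸ Subgroup.zpowers (c d 1) :=
    { toFun := fun x => A (.ofAdd x.f) * T ^ x.n
      map_one' := by simp
      map_mul' := fun x y => by
        simp only [Model.mul_f, Model.mul_n, ofAdd_add, map_mul, A_shift, zpow_add]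
        group }
  refine ⟨ψ, PresentedGroup.ext fun x => ?_⟩
  rw [MonoidHom.comp_apply, toModel_of]
  cases x with
  | t => simp [ψ, genImage, T, t]
  | a i => simp [ψ, genImage, hA, a]
  | c i =>
    rw [show ψ (genImage d (.c i)) = 1 by simp [ψ, genImage]]
    exact (mk_c i).symm

lemma toModel_injective (hd : d.Odd) (hd1 : d 1 = 1) : Function.Injective (toModel hd hd1) := by
  rw [injective_iff_map_eq_one]
  intro g hg
  obtain ⟨ψ, hψ⟩ := exists_comp_toModel_eq_mk' hd hd1
  have hg_mem : g ∈ Subgroup.zpowers (c d 1) := by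
    rw [← QuotientGroup.eq_one_iff, ← QuotientGroup.mk'_apply, ← hψ, MonoidHom.comp_apply, hg,
      map_one]
  obtain ⟨k, rfl⟩ := Subgroup.mem_zpowers_iff.mp hg_mem
  have hk : 2 * k = 0 := by simpa [toModel_c_one_zpow] using congrArg Model.z hg
  rw [show k = 0 by lia, zpow_zero]

lemma isConj_toModel_iff (hd : d.Odd) (hd1 : d 1 = 1) {g₁ g₂ : Gd d} :
    IsConj (toModel hd hd1 g₁) (toModel hd hd1 g₂) ↔ IsConj g₁ g₂ := by
  refine ⟨fun h => ?_, fun h => (toModel hd hd1).map_isConj h⟩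
  obtain ⟨x, hx⟩ := isConj_iff.mp h
  obtain ⟨g, z, rfl⟩ := exists_toModel_mul_central hd hd1 x
  refine isConj_iff.mpr ⟨g, toModel_injective hd hd1 ?_⟩
  rw [map_mul, map_mul, map_inv, ← hx, mul_assoc _ (⟨z, 0, 0⟩ : Model d),
    (Model.central_commute z _).eq]
  group

end Presentation

section Divisible

/-- The filter along which natural numbers become more and more divisible. It provides moduli
that can be chosen one after the other, each divisible enough in terms of the previous ones. -/
def divisible : Filter ℕ := Filter.map Nat.factorial Filter.atTop

instance : divisible.NeBot := inferInstanceAs (Filter.map _ _).NeBot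

lemma eventually_ne_zero_divisible : ∀ᶠ q in divisible, q ≠ 0 :=
  Filter.eventually_map.mpr <| .of_forall Nat.factorial_ne_zero

lemma eventually_dvd_divisible {N : ℕ} (hN : N ≠ 0) : ∀ᶠ q in divisible, N ∣ q :=
  Filter.eventually_map.mpr <| (Filter.eventually_ge_atTop N).mono fun _ =>
    Nat.dvd_factorial (Nat.pos_of_ne_zero hN)

lemma eventually_intCast_ne_zero {v : ℤ} (hv : v ≠ 0) : ∀ᶠ q in divisible, (v : ZMod q) ≠ 0 := by
  filter_upwards [eventually_dvd_divisible (Nat.succ_ne_zero v.natAbs)] with q hq hv_zero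
  rw [ZMod.intCast_zmod_eq_zero_iff_dvd, Int.natCast_dvd] at hv_zero
  have := Nat.le_of_dvd (Int.natAbs_pos.mpr hv) (hq.trans hv_zero)
  lia

lemma eventually_intCast_ne_of_mem (K : AddSubgroup ℤ) {v : ℤ} (hv : v ∉ K) :
    ∀ᶠ q in divisible, ∀ w ∈ K, (w : ZMod q) ≠ v := by
  obtain ⟨r, rfl⟩ := Int.subgroup_cyclic K
  simp only [← AddSubgroup.zmultiples_eq_closure, Int.mem_zmultiples_iff] at hv ⊢
  obtain rfl | hr := eq_or_ne r 0
  · filter_upwards [eventually_intCast_ne_zero (by simpa using hv)] with q hq w hw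
    rwa [zero_dvd_iff.mp hw, Int.cast_zero, ne_comm]
  · filter_upwards [eventually_dvd_divisible (Int.natAbs_ne_zero.mpr hr)] with q hq w hw hwv
    rw [ZMod.intCast_eq_intCast_iff_dvd_sub] at hwv
    exact hv ((dvd_sub_left hw).mp ((Int.natAbs_dvd_natAbs.mp hq).trans hwv))

end Divisible

section Reduction

variable {q P : ℕ}

/-- Reduction of the index modulo `P` and of the coefficients modulo `q`. -/
noncomputable def reduce (q P : ℕ) : (ℤ →₀ ℤ) →+ (ZMod P →₀ ZMod q) :=
  push (Int.castAddHom (ZMod P)) (Int.castRingHom (ZMod q))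

lemma reduce_surjective : Function.Surjective (reduce q P) :=
  push_surjective ZMod.intCast_surjective ZMod.intCast_surjective

lemma reduce_shift (k : ℤ) (f : ℤ →₀ ℤ) :
    reduce q P (shift k f) = shift (k : ZMod P) (reduce q P f) :=
  push_shift _ _ _ _

lemma exists_mem_support_of_reduce_ne_zero {f : ℤ →₀ ℤ} {u : ZMod P} (h : reduce q P f u ≠ 0) :
    ∃ j ∈ f.support, (j : ZMod P) = u := by
  rw [reduce, push_apply] at h
  obtain ⟨j, hj, h⟩ := Finset.exists_ne_zero_of_sum_ne_zero h
  exact ⟨j, hj, (ite_ne_right_iff.mp h).1⟩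

lemma eventually_reduce_apply_ne_zero {f : ℤ →₀ ℤ} {i : ℤ} (hi : f i ≠ 0) :
    ∀ᶠ q in divisible, ∀ᶠ P in divisible, reduce q P f i ≠ 0 := by
  have h_inj : ∀ᶠ P in divisible, ∀ j ∈ f.support.erase i, ((j - i : ℤ) : ZMod P) ≠ 0 :=
    (Filter.eventually_all_finset _).mpr fun j hj =>
      eventually_intCast_ne_zero (sub_ne_zero.mpr (Finset.ne_of_mem_erase hj))
  filter_upwards [eventually_intCast_ne_zero hi] with q hq
  filter_upwards [h_inj] with P hP
  have : reduce q P f i = f i := by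
    rw [reduce, push_apply, Finset.sum_eq_single i]
    · simp
    · intro j hj hji
      have := hP j (Finset.mem_erase.mpr ⟨hji, hj⟩)
      rw [Int.cast_sub, sub_ne_zero] at this
      exact if_neg this
    · simp [hi]
  rwa [this]

lemma eventually_reduce_notMem_coboundaries_zero {f : ℤ →₀ ℤ} (hf : f ≠ 0) :
    ∀ᶠ q in divisible, ∀ᶠ P in divisible, reduce q P f ∉ coboundaries (ZMod q) 0 := by
  obtain ⟨i, hi⟩ := Finsupp.ne_iff.mp hf
  filter_upwards [eventually_reduce_apply_ne_zero hi] with q hq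
  filter_upwards [hq] with P hP hmem
  obtain ⟨h, hh⟩ := mem_coboundaries.mp hmem
  simp [← hh] at hP

lemma eventually_reduce_notMem_coboundaries_of_ne_zero {n : ℤ} (hn : n ≠ 0) {f : ℤ →₀ ℤ}
    (hf : f ∉ coboundaries ℤ n) :
    ∀ᶠ q in divisible, ∀ᶠ P in divisible, reduce q P f ∉ coboundaries (ZMod q) (n : ZMod P) := by
  let f' := push (Int.castAddHom (ZMod n.natAbs)) (RingHom.id ℤ) f
  have hf' : f' ≠ 0 := fun h => hf <| mem_coboundaries_of_push_eq_zero
    (by rw [ZMod.ker_intCastAddHom, Int.zmultiples_natAbs]) h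
  obtain ⟨u, hu⟩ := Finsupp.ne_iff.mp hf'
  filter_upwards [eventually_intCast_ne_zero hu] with q hq
  filter_upwards [eventually_dvd_divisible (Int.natAbs_ne_zero.mpr hn)] with P hP hmem
  have h_push : push (ZMod.castHom hP (ZMod n.natAbs)).toAddMonoidHom (.id _) (reduce q P f) =
      push (.id _) (Int.castRingHom (ZMod q)) f' := by
    rw [reduce, push_push, push_push]
    congr 2
    ext
    simp [ZMod.cast_one hP]
  have hn_zero : (ZMod.castHom hP (ZMod n.natAbs)).toAddMonoidHom n = 0 := by
    simp [ZMod.intCast_zmod_eq_zero_iff_dvd]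
  rw [push_eq_zero_of_mem_coboundaries hn_zero _ hmem] at h_push
  refine hq ?_
  have := congr($h_push u)
  simpa [push, eq_comm] using this

lemma eventually_reduce_notMem_coboundaries {n : ℤ} {f : ℤ →₀ ℤ} (hf : f ∉ coboundaries ℤ n) :
    ∀ᶠ q in divisible, ∀ᶠ P in divisible, reduce q P f ∉ coboundaries (ZMod q) (n : ZMod P) := by
  obtain rfl | hn := eq_or_ne n 0
  · simpa using eventually_reduce_notMem_coboundaries_zero fun h : f = 0 => hf (h ▸ zero_mem _)
  · exact eventually_reduce_notMem_coboundaries_of_ne_zero hn hf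

end Reduction

section Periodicity

variable {d : ℤ → ℤ} {q P : ℕ}

/-- `P` is a (not necessarily minimal) period of `d` modulo `q`. -/
def IsPeriodMod (d : ℤ → ℤ) (q P : ℕ) : Prop := Function.Periodic (fun i => (d i : ZMod q)) P

/-- `d` is periodic modulo every positive integer. -/
def ResiduallyPeriodic (d : ℤ → ℤ) : Prop := ∀ q : ℕ, 0 < q → ∃ P : ℕ, 0 < P ∧ IsPeriodMod d q P

lemma IsPeriodMod.of_dvd {P' : ℕ} (h : IsPeriodMod d q P) (hP : P ∣ P') : IsPeriodMod d q P' := by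
  obtain ⟨k, rfl⟩ := hP
  simpa [IsPeriodMod, mul_comm] using Function.Periodic.nat_mul h k

lemma ResiduallyPeriodic.eventually_isPeriodMod (hd : ResiduallyPeriodic d) :
    ∀ᶠ q in divisible, ∀ᶠ P in divisible, IsPeriodMod d q P := by
  filter_upwards [eventually_ne_zero_divisible] with q hq
  obtain ⟨P₀, hP₀, h⟩ := hd q (Nat.pos_of_ne_zero hq)
  filter_upwards [eventually_dvd_divisible hP₀.ne'] with P hP using h.of_dvd hP

/-- The reduction of `d` modulo `q` as a function on `ZMod P`; it is only meaningful if
`P` is a period of `d` modulo `q`. -/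
def residue (d : ℤ → ℤ) (q P : ℕ) (u : ZMod P) : ZMod q := d (u.cast : ℤ)

lemma residue_intCast (h : IsPeriodMod d q P) (i : ℤ) : residue d q P i = d i := by
  have := Function.Periodic.int_mul h (i / P) (i % P)
  simpa only [residue, ZMod.coe_intCast, Int.cast_eq, mul_comm _ (P : ℤ), Int.emod_add_mul_ediv]
    using this.symm

lemma odd_residue (hd : d.Odd) (h : IsPeriodMod d q P) : (residue d q P).Odd := fun u => by
  obtain ⟨i, rfl⟩ := ZMod.intCast_surjective u
  rw [← Int.cast_neg, residue_intCast h, residue_intCast h, hd, Int.cast_neg]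

lemma periodic_residue {P₀ : ℕ} (h : IsPeriodMod d q P) (h₀ : IsPeriodMod d q P₀) :
    Function.Periodic (residue d q P) P₀ := fun u => by
  obtain ⟨i, rfl⟩ := ZMod.intCast_surjective u
  rw [← Int.cast_natCast, ← Int.cast_add, residue_intCast h, residue_intCast h]
  exact h₀ i

lemma form_reduce (h : IsPeriodMod d q P) (f g : ℤ →₀ ℤ) :
    form (residue d q P) (reduce q P f) (reduce q P g) = form d f g :=
  form_push (residue_intCast h) f g

/-- The homomorphism from the model of `G_d` to the finite model given by a modulus `q` and a
period `P` of `d` modulo `q`. -/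
noncomputable def reduceHom (h : IsPeriodMod d q P) : Model d →* Model (residue d q P) :=
  Model.map (Int.castAddHom (ZMod P)) (Int.castRingHom (ZMod q)) (residue_intCast h)

@[simp]
lemma reduceHom_z (h : IsPeriodMod d q P) (x : Model d) : (reduceHom h x).z = x.z := rfl

@[simp]
lemma reduceHom_f (h : IsPeriodMod d q P) (x : Model d) : (reduceHom h x).f = reduce q P x.f := rfl

@[simp]
lemma reduceHom_n (h : IsPeriodMod d q P) (x : Model d) : (reduceHom h x).n = x.n := rfl

lemma dvd_addOrderOf_intCast {m P : ℕ} {c : ℤ} (hc : c ≠ 0) (h : c.natAbs * m ∣ P) :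
    m ∣ addOrderOf (c : ZMod P) := by
  have h_nsmul := addOrderOf_nsmul_eq_zero (c : ZMod P)
  rw [nsmul_eq_mul, ← Int.cast_natCast, ← Int.cast_mul, ZMod.intCast_zmod_eq_zero_iff_dvd,
    Int.natCast_dvd, Int.natAbs_mul, Int.natAbs_natCast, mul_comm] at h_nsmul
  exact Nat.dvd_of_mul_dvd_mul_left (Int.natAbs_pos.mpr hc) (h.trans h_nsmul)

lemma ResiduallyPeriodic.eventually_form_eq_zero (hd : ResiduallyPeriodic d) {n : ℤ}
    (hn : n ≠ 0) :
    ∀ᶠ q in divisible, ∀ᶠ P in divisible, ∀ s : ZMod P →₀ ZMod q, shift (n : ZMod P) s = s →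
      ∀ g, form (residue d q P) s g = 0 := by
  filter_upwards [eventually_ne_zero_divisible] with q hq
  obtain ⟨P₀, hP₀, h₀⟩ := hd q (Nat.pos_of_ne_zero hq)
  have hc : n * P₀ ≠ 0 := mul_ne_zero hn (Nat.cast_ne_zero.mpr hP₀.ne')
  filter_upwards [eventually_dvd_divisible hP₀.ne', eventually_ne_zero_divisible,
    eventually_dvd_divisible (mul_ne_zero (Int.natAbs_ne_zero.mpr hc) hq)]
    with P hP hP_ne hPc s hs g
  have : NeZero P := ⟨hP_ne⟩
  have hsn : Function.Periodic s n := fun u => by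
    conv_lhs => rw [← hs, add_comm]
    exact shift_apply_add _ _ _
  refine form_eq_zero_of_periodic (c := ((n * P₀ : ℤ) : ZMod P)) ?_ ?_ ?_ g
  · simpa using (periodic_residue (h₀.of_dvd hP) h₀).int_mul n
  · simpa [mul_comm] using hsn.nat_mul P₀
  · exact (ZMod.natCast_eq_zero_iff _ _).mpr (dvd_addOrderOf_intCast hc hPc)

end Periodicity

section Central

variable {G : Type*} [Group G]

lemma semiconjBy_mul_iff_of_central {c u w x y : G} (hc : ∀ g, Commute c g)
    (hu : SemiconjBy u x (c * y)) : SemiconjBy (u * w) x y ↔ SemiconjBy w (c * x) x := by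
  have hcw : SemiconjBy (u * w) (c * x) (c * y) ↔ SemiconjBy (u * w) x y := by
    simp only [SemiconjBy, ← mul_assoc, (hc (u * w)).symm.eq]
    simp only [mul_assoc, mul_right_inj]
  rw [← hcw]
  refine ⟨fun h => ?_, hu.mul_left⟩
  simpa using hu.inv_symm_left.mul_left h

variable {I S : Type*} [AddCommGroup I] [CommRing S] {d : I → S}

lemma Model.semiconjBy_central_mul_iff {x w : Model d} {z : S} (hw : w.n = 0) :
    SemiconjBy w (⟨z, 0, 0⟩ * x) x ↔
      shift x.n w.f = w.f ∧ z + form d w.f x.f = form d x.f w.f := by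
  simp only [semiconjBy_iff, hw, mul_z, mul_f, mul_n, zero_add, shift_zero, map_zero,
    LinearMap.zero_apply, add_zero, true_and, add_comm w.f, add_right_inj]
  refine ⟨fun ⟨hf, hz⟩ => ⟨hf.symm, ?_⟩, fun ⟨hf, hz⟩ => ⟨hf.symm, ?_⟩⟩
  · rw [← hf] at hz
    linear_combination hz
  · rw [hf, ← hz]
    ring

lemma Model.exists_semiconjBy_central_mul {x y : Model d} {k : I} (hn : x.n = y.n)
    (hf : y.f - shift k x.f ∈ coboundaries S x.n) :
    ∃ u : Model d, ∃ z, u.n = k ∧ SemiconjBy u x (⟨z, 0, 0⟩ * y) := by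
  obtain ⟨g, hg⟩ := mem_coboundaries.mp hf
  refine ⟨⟨0, g, k⟩, x.z + form d g (shift k x.f) - y.z - form d y.f (shift x.n g), rfl, ?_⟩
  rw [semiconjBy_iff]
  refine ⟨by simpa, ?_, by simp; ring⟩
  rw [sub_eq_sub_iff_add_eq_add] at hg
  simpa using hg

lemma Model.sub_shift_mem_coboundaries {x y u : Model d} (h : SemiconjBy u x y) :
    y.f - shift u.n x.f ∈ coboundaries S x.n := by
  obtain ⟨-, hf, -⟩ := semiconjBy_iff.mp h
  exact mem_coboundaries.mpr ⟨u.f, sub_eq_sub_iff_add_eq_add.mpr hf⟩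

end Central

section Conjugacy

variable {d : ℤ → ℤ} {q P : ℕ}

lemma reduceHom_central (h : IsPeriodMod d q P) (z : ℤ) :
    reduceHom h ⟨z, 0, 0⟩ = ⟨z, 0, 0⟩ := by
  ext1 <;> simp

lemma eventually_not_semiconjBy_central_mul_of_n_eq_zero {x : Model d} (hn : x.n = 0) {z : ℤ}
    (hz : ∀ w : Model d, w.n = 0 → ¬SemiconjBy w (⟨z, 0, 0⟩ * x) x) :
    ∀ᶠ q in divisible, ∀ P, ∀ h : IsPeriodMod d q P, ∀ w, w.n = 0 →
      ¬SemiconjBy w (⟨z, 0, 0⟩ * reduceHom h x) (reduceHom h x) := by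
  let K : AddSubgroup ℤ := (LinearMap.range (form d x.f - (form d).flip x.f)).toAddSubgroup
  have hK : z ∉ K := by
    rintro ⟨g, hg⟩
    refine hz ⟨0, g, 0⟩ rfl ((Model.semiconjBy_central_mul_iff rfl).mpr ⟨by simp [hn], ?_⟩)
    exact (eq_sub_iff_add_eq.mp hg.symm)
  filter_upwards [eventually_intCast_ne_of_mem K hK] with q hq P h w hw hconj
  obtain ⟨g, hg⟩ := reduce_surjective w.f
  have hz := ((Model.semiconjBy_central_mul_iff hw).mp hconj).2
  rw [reduceHom_f, ← hg, form_reduce h, form_reduce h, ← eq_sub_iff_add_eq, ← Int.cast_sub] at hz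
  exact hq _ ⟨g, rfl⟩ hz.symm

lemma eventually_not_semiconjBy_central_mul_of_n_ne_zero (hd : d.Odd) (hper : ResiduallyPeriodic d)
    {x : Model d} (hn : x.n ≠ 0) {z : ℤ} (hz : z ≠ 0) :
    ∀ᶠ q in divisible, ∀ᶠ P in divisible, ∀ h : IsPeriodMod d q P, ∀ w, w.n = 0 →
      ¬SemiconjBy w (⟨z, 0, 0⟩ * reduceHom h x) (reduceHom h x) := by
  filter_upwards [eventually_intCast_ne_zero hz, hper.eventually_form_eq_zero hn] with q hq hform
  filter_upwards [hform] with P hform h w hw hconj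
  obtain ⟨hs, hconj⟩ := (Model.semiconjBy_central_mul_iff hw).mp hconj
  rw [form_swap (odd_residue hd h) w.f, hform _ hs, neg_zero, add_zero] at hconj
  exact hq hconj

lemma eventually_not_semiconjBy_central_mul (hd : d.Odd) (hper : ResiduallyPeriodic d)
    {x : Model d} {z : ℤ} (hz : ∀ w : Model d, w.n = 0 → ¬SemiconjBy w (⟨z, 0, 0⟩ * x) x) :
    ∀ᶠ q in divisible, ∀ᶠ P in divisible, ∀ h : IsPeriodMod d q P, ∀ w, w.n = 0 →
      ¬SemiconjBy w (⟨z, 0, 0⟩ * reduceHom h x) (reduceHom h x) := by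
  by_cases hn : x.n = 0
  · exact (eventually_not_semiconjBy_central_mul_of_n_eq_zero hn hz).mono fun q hq =>
      .of_forall hq
  · exact eventually_not_semiconjBy_central_mul_of_n_ne_zero hd hper hn fun h0 =>
      hz 1 rfl ((Model.semiconjBy_central_mul_iff rfl).mpr (by simp [h0]))

lemma eventually_not_semiconjBy (hd : d.Odd) (hper : ResiduallyPeriodic d) {x y : Model d}
    (hn : x.n = y.n) {k : ℤ} (hxy : ∀ u : Model d, u.n = k → ¬SemiconjBy u x y) :
    ∀ᶠ q in divisible, ∀ᶠ P in divisible, ∀ h : IsPeriodMod d q P, ∀ v, v.n = (k : ZMod P) →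
      ¬SemiconjBy v (reduceHom h x) (reduceHom h y) := by
  by_cases hf : y.f - shift k x.f ∈ coboundaries ℤ x.n
  · obtain ⟨u, z, hu, hconj⟩ := Model.exists_semiconjBy_central_mul hn hf
    have hz (w : Model d) (hw : w.n = 0) : ¬SemiconjBy w (⟨z, 0, 0⟩ * x) x := fun h =>
      hxy (u * w) (by simp [hu, hw])
        ((semiconjBy_mul_iff_of_central (Model.central_commute z) hconj).mpr h)
    filter_upwards [eventually_not_semiconjBy_central_mul hd hper hz] with q hq
    filter_upwards [hq] with P hP h v hv hconj_v
    have hconj_red := hconj.map (reduceHom h)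
    rw [map_mul, reduceHom_central] at hconj_red
    refine hP h ((reduceHom h u)⁻¹ * v) (by simp [hu, hv]) ?_
    rwa [← semiconjBy_mul_iff_of_central (Model.central_commute _) hconj_red,
      mul_inv_cancel_left]
  · filter_upwards [eventually_reduce_notMem_coboundaries hf] with q hq
    filter_upwards [hq] with P hP h v hv hconj
    have hmem := Model.sub_shift_mem_coboundaries hconj
    rw [hv, reduceHom_f, reduceHom_f, ← reduce_shift, ← map_sub] at hmem
    exact hP hmem

lemma exists_mem_Ico_semiconjBy_reduceHom {x y : Model d} (hn : x.n ≠ 0) (h : IsPeriodMod d q P)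
    {v : Model (residue d q P)} (hv : SemiconjBy v (reduceHom h x) (reduceHom h y)) :
    ∃ l ∈ Finset.Ico 0 |x.n|, ∃ w, w.n = (l : ZMod P) ∧
      SemiconjBy w (reduceHom h x) (reduceHom h y) := by
  obtain ⟨k, hk⟩ := ZMod.intCast_surjective v.n
  refine ⟨k % x.n, Finset.mem_Ico.mpr ⟨Int.emod_nonneg _ hn, Int.emod_lt_abs _ hn⟩,
    v * (reduceHom h x) ^ (-(k / x.n)), ?_,
    hv.mul_left ((Commute.refl (reduceHom h x)).zpow_left _)⟩
  rw [Model.mul_n, Model.zpow_n, reduceHom_n, ← hk, Int.emod_def]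
  push_cast
  simp [sub_eq_add_neg, mul_comm]

lemma eventually_exists_mem_image_semiconjBy_reduceHom {x y : Model d} (hn : x.n = 0) {i : ℤ}
    (hi : x.f i ≠ 0) :
    ∀ᶠ q in divisible, ∀ᶠ P in divisible, ∀ h : IsPeriodMod d q P, ∀ v,
      SemiconjBy v (reduceHom h x) (reduceHom h y) → ∃ l ∈ y.f.support.image (· - i), v.n = l := by
  filter_upwards [eventually_reduce_apply_ne_zero hi] with q hq
  filter_upwards [hq] with P hP h v hv
  have hf : shift v.n (reduce q P x.f) = reduce q P y.f := by
    simpa [hn, add_comm] using (Model.semiconjBy_iff.mp hv).2.1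
  rw [← shift_apply_add v.n, hf] at hP
  obtain ⟨j, hj, hji⟩ := exists_mem_support_of_reduce_ne_zero hP
  exact ⟨j - i, Finset.mem_image_of_mem _ hj, by rw [Int.cast_sub, hji, add_sub_cancel_right]⟩

lemma exists_finset_translations (x y : Model d) :
    ∃ F : Finset ℤ, ∀ᶠ q in divisible, ∀ᶠ P in divisible, ∀ h : IsPeriodMod d q P, ∀ v,
      SemiconjBy v (reduceHom h x) (reduceHom h y) →
      ∃ l ∈ F, ∃ w, w.n = (l : ZMod P) ∧ SemiconjBy w (reduceHom h x) (reduceHom h y) := by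
  by_cases hn : x.n = 0
  · by_cases hf : x.f = 0
    · refine ⟨{0}, .of_forall fun q => .of_forall fun P h v hv =>
        ⟨0, Finset.mem_singleton_self 0, 1, by simp, ?_⟩⟩
      have hx : x = ⟨x.z, 0, 0⟩ := by ext1 <;> simp [hn, hf]
      have h_comm : Commute v (reduceHom h x) := by
        rw [hx, reduceHom_central]
        exact (Model.central_commute _ v).symm
      have := hv.eq
      rw [h_comm.eq, mul_left_inj] at this
      rw [this]
      exact .one_left _
    · obtain ⟨i, hi⟩ := Finsupp.ne_iff.mp hf
      refine ⟨y.f.support.image (· - i), ?_⟩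
      filter_upwards [eventually_exists_mem_image_semiconjBy_reduceHom hn hi] with q hq
      filter_upwards [hq] with P hP h v hv
      obtain ⟨l, hl, hvl⟩ := hP h v hv
      exact ⟨l, hl, v, hvl, hv⟩
  · exact ⟨Finset.Ico 0 |x.n|, .of_forall fun q => .of_forall fun P h v hv =>
      exists_mem_Ico_semiconjBy_reduceHom hn h hv⟩

theorem eventually_not_isConj_reduceHom (hd : d.Odd) (hper : ResiduallyPeriodic d) {x y : Model d}
    (hxy : ¬IsConj x y) :
    ∀ᶠ q in divisible, ∀ᶠ P in divisible, ∀ h : IsPeriodMod d q P,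
      ¬IsConj (reduceHom h x) (reduceHom h y) := by
  simp only [isConj_iff_exists_semiconjBy, not_exists] at hxy ⊢
  by_cases hn : x.n = y.n
  · obtain ⟨F, hF⟩ := exists_finset_translations x y
    have hF_not : ∀ᶠ q in divisible, ∀ᶠ P in divisible, ∀ l ∈ F, ∀ h : IsPeriodMod d q P, ∀ w,
        w.n = (l : ZMod P) → ¬SemiconjBy w (reduceHom h x) (reduceHom h y) := by
      simp only [Filter.eventually_all_finset]
      exact fun l _ => eventually_not_semiconjBy hd hper hn fun u _ => hxy u
    filter_upwards [hF, hF_not] with q hq hq_not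
    filter_upwards [hq, hq_not] with P hP hP_not h v hv
    obtain ⟨l, hl, w, hwl, hw⟩ := hP h v hv
    exact hP_not l hl h w hwl hw
  · refine .of_forall fun q => ?_
    filter_upwards [eventually_intCast_ne_zero (sub_ne_zero.mpr hn)] with P hP h v hv
    have := (Model.semiconjBy_iff.mp hv).1
    rw [Int.cast_sub, sub_ne_zero] at hP
    exact hP this

end Conjugacy

section ConjSeparable

/-- Conjugacy separability of `G`: the condition that `g₁` and `g₂` have non-conjugate images in
the finite quotient `G ⧸ N` is spelled out in `G`. -/
def ConjSeparable (G : Type*) [Group G] : Prop :=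
  ∀ g₁ g₂ : G, ¬IsConj g₁ g₂ →
    ∃ N : Subgroup G, N.Normal ∧ N.FiniteIndex ∧ ∀ h : G, h * g₁ * h⁻¹ * g₂⁻¹ ∉ N

lemma exists_normal_of_not_isConj_map {G H : Type*} [Group G] [Group H] [Finite H] (φ : G →* H)
    {g₁ g₂ : G} (h : ¬IsConj (φ g₁) (φ g₂)) :
    ∃ N : Subgroup G, N.Normal ∧ N.FiniteIndex ∧ ∀ h : G, h * g₁ * h⁻¹ * g₂⁻¹ ∉ N := by
  refine ⟨φ.ker, inferInstance, inferInstance, fun x hx => h (isConj_iff.mpr ⟨φ x, ?_⟩)⟩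
  simpa [MonoidHom.mem_ker, mul_inv_eq_one] using hx

variable {d : ℤ → ℤ}

theorem ResiduallyPeriodic.conjSeparable (hper : ResiduallyPeriodic d) (hd : d.Odd)
    (hd1 : d 1 = 1) : ConjSeparable (Gd d) := by
  intro g₁ g₂ hg
  rw [← isConj_toModel_iff hd hd1] at hg
  obtain ⟨q, hq_ne, hq_per, hq⟩ := (eventually_ne_zero_divisible.and
    (hper.eventually_isPeriodMod.and (eventually_not_isConj_reduceHom hd hper hg))).exists
  obtain ⟨P, hP_ne, hP_per, hP⟩ := (eventually_ne_zero_divisible.and (hq_per.and hq)).exists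
  have : NeZero q := ⟨hq_ne⟩
  have : NeZero P := ⟨hP_ne⟩
  exact exists_normal_of_not_isConj_map ((reduceHom hP_per).comp (toModel hd hd1)) (hP hP_per)

lemma dvd_of_isConj_a_zpow_mul_c_zpow (hd : d.Odd) (hd1 : d 1 = 1) {m k : ℤ}
    (h : IsConj (a d 0 ^ m) (a d 0 ^ m * c d 1 ^ k)) : m ∣ k := by
  rw [← isConj_toModel_iff hd hd1, isConj_iff_exists_semiconjBy] at h
  obtain ⟨u, hu⟩ := h
  let e : ℤ →₀ ℤ := Finsupp.single 0 m
  have he : e = m • Finsupp.single 0 1 := by simp [e]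
  rw [map_mul, toModel_a_zpow, toModel_c_one_zpow] at hu
  obtain ⟨-, hf, hz⟩ := Model.semiconjBy_iff.mp hu
  have hf : u.f + shift u.n e = e + u.f := by simpa [e] using hf
  have hz : form d u.f (shift u.n e) = 2 * k + form d e u.f := by simpa [e] using hz
  have he_shift : shift u.n e = e := add_left_cancel (hf.trans (add_comm _ _))
  rw [he_shift, form_swap hd e, he, map_smul, LinearMap.smul_apply, smul_eq_mul] at hz
  exact ⟨-form d (Finsupp.single 0 1) u.f, by rw [mul_neg]; lia⟩

lemma conj_a_one_zpow (hd : d.Odd) (hd1 : d 1 = 1) (m u : ℤ) :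
    a d 1 ^ u * a d 0 ^ m * (a d 1 ^ u)⁻¹ = a d 0 ^ m * c d 1 ^ (m * u) := by
  apply toModel_injective hd hd1
  simp only [map_mul, map_inv, toModel_a_zpow, toModel_c_one_zpow]
  ext1
  · simp [hd.map_zero, hd1, hd 1]
    ring
  · simp
  · simp

lemma ConjSeparable.exists_normal_dvd (hsep : ConjSeparable (Gd d)) (hd : d.Odd) (hd1 : d 1 = 1)
    {q : ℕ} (hq : 0 < q) :
    ∃ N : Subgroup (Gd d), N.Normal ∧ N.FiniteIndex ∧ ∀ v : ℤ, c d 1 ^ v ∈ N → (q : ℤ) ∣ v := by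
  have h_not_conj (j : Set.Ioo 0 (q : ℤ)) :
      ¬IsConj (a d 0 ^ (q : ℤ)) (a d 0 ^ (q : ℤ) * c d 1 ^ (j : ℤ)) := fun h =>
    (Int.le_of_dvd j.2.1 (dvd_of_isConj_a_zpow_mul_c_zpow hd hd1 h)).not_gt j.2.2
  choose N hN hN_fin hN_not using fun j => hsep _ _ (h_not_conj j)
  refine ⟨⨅ j, N j, Subgroup.normal_iInf_normal hN, Subgroup.finiteIndex_iInf hN_fin,
    fun v hv => ?_⟩
  by_contra hqv
  have hj : v % q ∈ Set.Ioo 0 (q : ℤ) :=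
    ⟨(Int.emod_nonneg v (by lia)).lt_of_ne' (mt Int.dvd_of_emod_eq_zero hqv),
      Int.emod_lt_of_pos v (by lia)⟩
  refine hN_not ⟨v % q, hj⟩ (a d 1 ^ (-(v / q))) ?_
  have hv_eq : (q : ℤ) * -(v / q) - v % q = -v := by linarith [Int.mul_ediv_add_emod v q]
  have hv_mem := inv_mem (Subgroup.mem_iInf.mp hv ⟨v % q, hj⟩)
  rwa [conj_a_one_zpow hd hd1, mul_inv_rev, ← mul_assoc, mul_assoc (a d 0 ^ (q : ℤ)), ← zpow_neg,
    ← zpow_add, ((commute_c_one _).zpow_right _).eq, mul_inv_cancel_right, ← sub_eq_add_neg, hv_eq,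
    zpow_neg]

lemma isPeriodMod_index {q : ℕ} (N : Subgroup (Gd d)) [N.Normal]
    (hN : ∀ v : ℤ, c d 1 ^ v ∈ N → (q : ℤ) ∣ v) : IsPeriodMod d q N.index := by
  intro i
  have mk_a : (a d (i + N.index) : Gd d ⧸ N) = a d i := by
    have ht : ((t d ^ (N.index : ℤ) : Gd d) : Gd d ⧸ N) = 1 := by
      rw [QuotientGroup.eq_one_iff, zpow_natCast]
      exact N.pow_index_mem _
    rw [add_comm, ← conj_t_zpow_a, MulAut.conj_apply, QuotientGroup.mk_mul, QuotientGroup.mk_mul,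
      QuotientGroup.mk_inv, ht, one_mul, inv_one, mul_one]
  have mk_c_zpow (j : ℤ) : ((c d 1 ^ d j : Gd d) : Gd d ⧸ N) =
      pcomm (a d j : Gd d ⧸ N) (a d 0) := by
    rw [← c_eq_zpow, ← sub_zero j, ← pcomm_a_a, sub_zero]
    rfl
  have h_eq : ((c d 1 ^ d i : Gd d) : Gd d ⧸ N) = (c d 1 ^ d (i + N.index) : Gd d) := by
    rw [mk_c_zpow, mk_c_zpow, mk_a]
  rw [QuotientGroup.eq, ← zpow_neg, ← zpow_add, neg_add_eq_sub] at h_eq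
  exact ((ZMod.intCast_eq_intCast_iff_dvd_sub _ _ q).mpr (hN _ h_eq)).symm

theorem ConjSeparable.residuallyPeriodic (hsep : ConjSeparable (Gd d)) (hd : d.Odd)
    (hd1 : d 1 = 1) : ResiduallyPeriodic d := by
  intro q hq
  obtain ⟨N, _, hN_fin, hN⟩ := hsep.exists_normal_dvd hd hd1 hq
  exact ⟨N.index, Nat.pos_of_ne_zero hN_fin.index_ne_zero, isPeriodMod_index N hN⟩

end ConjSeparable

end HallGroup

/-- For `d : ℤ → ℤ` antisymmetric with `d 1 = 1`, the group `G_d` is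
conjugacy separable if and only if `d mod q` is periodic for every positive integer `q`.
(Here the images of `g₁`, `g₂` in `G ⧸ N` are conjugate iff `h g₁ h⁻¹ g₂⁻¹ ∈ N` for
some `h`.) -/
theorem stmt_6 (d : ℤ → ℤ) (hanti : ∀ i : ℤ, d (-i) = -d i) (hd1 : d 1 = 1) :
    (∀ g₁ g₂ : Gd d, ¬ IsConj g₁ g₂ →
        ∃ N : Subgroup (Gd d), N.Normal ∧ N.FiniteIndex ∧
          ∀ h : Gd d, h * g₁ * h⁻¹ * g₂⁻¹ ∉ N) ↔
      ∀ q : ℕ, 0 < q → ∃ P : ℕ, 0 < P ∧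
        ∀ i : ℤ, ((d (i + P) : ZMod q) = (d i : ZMod q)) := by
  change HallGroup.ConjSeparable (Gd d) ↔ HallGroup.ResiduallyPeriodic d
  exact ⟨fun hsep => hsep.residuallyPeriodic hanti hd1, fun hper => hper.conjSeparable hanti hd1⟩
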